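/- Rippa's leave-one-out cross validation identity: let A be an N×N real invertible matrix (N ≥ 2), f ∈ ℝ^N, c = A⁻¹ f, and fix an index i. Let B be the (N−1)×(N−1) submatrix of A obtained by deleting row i and column i, assumed invertible, and let g ∈ ℝ^{N−1} be f with its i-th entry deleted and d = B⁻¹ g. Then the leave-one-out residual satisfies f_i − Σ_{k≠i} A_{ik} d_k = c_i / (A⁻¹)_{ii}, where (A⁻¹)_{ii} ≠ 0. -/

import Mathlib

/-- Rippa's LOOCV identity: for an invertible `N × N` real matrix `A`
(`N ≥ 2`), `c = A⁻¹ f`, an index `i`, the submatrix `B` of `A` deleting row and column `i`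
(assumed invertible), `g` the vector `f` with its `i`-th entry deleted, and `d = B⁻¹ g`,
the leave-one-out residual satisfies
`f i - ∑_{k ≠ i} A i k * d k = c i / (A⁻¹ i i)`, with `(A⁻¹) i i ≠ 0`. -/
theorem rippa_loocv_identity
    (N : ℕ) (hN : 2 ≤ N)
    (A : Matrix (Fin N) (Fin N) ℝ) (hA : IsUnit A.det)
    (f : Fin N → ℝ) (i : Fin N)
    (c : Fin N → ℝ) (hc : c = Matrix.mulVec A⁻¹ f)
    (B : Matrix {k : Fin N // k ≠ i} {k : Fin N // k ≠ i} ℝ)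
    (hB : B = fun k l => A k.1 l.1)
    (hBinv : IsUnit B.det)
    (g : {k : Fin N // k ≠ i} → ℝ) (hg : g = fun k => f k.1)
    (d : {k : Fin N // k ≠ i} → ℝ) (hd : d = Matrix.mulVec B⁻¹ g) :
    A⁻¹ i i ≠ 0 ∧
      f i - ∑ k : {k : Fin N // k ≠ i}, A i k.1 * d k = c i / A⁻¹ i i := by
  have hAi : A⁻¹ * A = 1 := Matrix.nonsing_inv_mul A hA
  have hAi2 : A * A⁻¹ = 1 := Matrix.mul_nonsing_inv A hA
  have key : ∀ (w : Fin N → ℝ) (k : Fin N), w i = 0 →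
      Matrix.mulVec A w k = ∑ l : {l : Fin N // l ≠ i}, A k l.1 * w l.1 := by
    intro w k hw
    simp only [Matrix.mulVec, dotProduct]
    rw [Fintype.sum_eq_add_sum_subtype_ne _ i, hw]
    simp
  have hnz : A⁻¹ i i ≠ 0 := by
    intro h0
    have hv : Matrix.mulVec A (fun k => A⁻¹ k i) = fun k => (1 : Matrix (Fin N) (Fin N) ℝ) k i := by
      rw [← hAi2]; rfl
    have hBv : Matrix.mulVec B (fun k => A⁻¹ k.1 i) = 0 := by
      funext k
      have h1 := congrFun hv k.1
      rw [key (fun k => A⁻¹ k i) _ h0, Matrix.one_apply_ne k.2] at h1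
      subst hB
      exact h1
    have hz : (fun k : {k : Fin N // k ≠ i} => A⁻¹ k.1 i) = 0 := by
      have := congrArg (Matrix.mulVec B⁻¹) hBv
      rwa [Matrix.mulVec_mulVec, Matrix.nonsing_inv_mul B hBinv, Matrix.one_mulVec,
        Matrix.mulVec_zero] at this
    have h2 := congrFun hv i
    rw [key (fun k => A⁻¹ k i) _ h0, Matrix.one_apply_eq] at h2
    have h3 : ∑ l : {l : Fin N // l ≠ i}, A i l.1 * A⁻¹ l.1 i = 0 :=
      Finset.sum_eq_zero fun l _ => by
        have h4 : A⁻¹ l.1 i = 0 := congrFun hz l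
        rw [h4, mul_zero]
    exact zero_ne_one (h3.symm.trans h2)
  refine ⟨hnz, ?_⟩
  · have hne : c i = (f i - ∑ k : {k : Fin N // k ≠ i}, A i k.1 * d k) * A⁻¹ i i := by
      set r := f i - ∑ k : {k : Fin N // k ≠ i}, A i k.1 * d k with hr
      let e : Fin N → ℝ := fun k => if h : k ≠ i then d ⟨k, h⟩ else 0
      have hei : e i = 0 := by simp [e]
      have hed : ∀ l : {l : Fin N // l ≠ i}, e l.1 = d l := fun l => by simp [e, l.2]
      have hBd : Matrix.mulVec B d = g := by
        rw [hd, Matrix.mulVec_mulVec, Matrix.mul_nonsing_inv B hBinv, Matrix.one_mulVec]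
      have hfe : f = Matrix.mulVec A e + Pi.single i r := by
        funext k
        rw [Pi.add_apply, key _ _ hei]
        simp only [hed]
        by_cases hk : k = i
        · subst hk
          simp [hr]
        · have h1 := congrFun hBd ⟨k, hk⟩
          subst hB hg
          rw [Pi.single_eq_of_ne hk, add_zero]
          exact h1.symm
      rw [hc, hfe, Matrix.mulVec_add, Matrix.mulVec_mulVec, hAi, Matrix.one_mulVec,
        Pi.add_apply, hei, Matrix.mulVec_single]
      simp [mul_comm]
    rw [hne, mul_div_cancel_right₀ _ hnz]
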